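/- Let Γ be a countable directed graph with a vertex v₀ from which every vertex can be reached, F a potential and β ∈ ℝ. Let H ⊆ Γ_V be a hereditary set with v₀ ∉ H, let B(β) and C(β) be the restrictions of A(β) to H × H and to (Γ_V \ H) × (Γ_V \ H) respectively, set M = {a ∈ Γ_Ar : s(a) ∉ H, r(a) ∈ H}, and let ψ : H → [0,∞) be a B(β)-harmonic vector. Then: (i) there is an A(β)-harmonic vector φ : Γ_V → [0,∞) with φ|_H = ψ if and only if Σ_{a ∈ M} Σ_{n=0}^∞ C(β)^n_{v₀,s(a)} e^{−βF(a)} ψ_{r(a)} < ∞; (ii) when this holds, the vector ψ̄ defined by ψ̄_v = Σ_{a ∈ M} Σ_{n=0}^∞ C(β)^n_{v,s(a)} e^{−βF(a)} ψ_{r(a)} for v ∉ H and ψ̄_v = ψ_v for v ∈ H is an A(β)-harmonic vector extending ψ. -/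

import Mathlib

/-!
The argument is a first-exit decomposition. Write `A = A(β)`, `C` for its restriction to `Hᶜ`, and
`b u = Σ_{a ∈ M, s(a) = u} e^{-βF(a)} ψ_{r(a)}`. If `φ` agrees with `ψ` on `H`, splitting the sum
over the arrows that leave `v ∉ H` according to their range gives `(Aφ)_v = b_v + (Cφ)_v`
(`tsum_Amat_mul_eq`). At `v ∈ H` heredity reduces `Aφ = φ` to the harmonicity of `ψ`
(`tsum_Amat_mul_of_mem`). So harmonic extensions of `ψ` are the finite solutions of
`φ = b + Cφ` on `Hᶜ`.

The vector of the theorem is `Σₙ Cⁿ b` (`exitSum_eq`), the minimal nonnegative solution of this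
equation: it solves it by re-indexing in `n` (`tsum_pow_exit_eq`), and an induction on the number
of terms bounds it by any other solution (`tsum_pow_exit_le`). The bound at `v₀` gives the forward
implication. For the converse, a vector fixed by `A` which is finite at `v₀` is finite at every
vertex reachable from `v₀`, because `A u w > 0` whenever there is an arrow from `u` to `w`
(`ne_top_of_finPath`).
-/

open MeasureTheory Filter Topology
open scoped ENNReal NNReal

namespace GraphKMS

variable {V A : Type}

/-- The space `P(Γ)` of infinite paths of a directed graph with vertex set `V`,
arrow set `A`, source map `s` and range map `r`. -/
structure PathSpace (s r : A → V) : Type where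
  seq : ℕ → A
  compat : ∀ i, r (seq i) = s (seq (i + 1))

/-- The Borel σ-algebra of `P(Γ)`, i.e. the trace on `P(Γ)` of the Borel σ-algebra of the
product `A^ℕ` with `A` discrete. -/
instance (s r : A → V) : MeasurableSpace (PathSpace s r) :=
  MeasurableSpace.comap (fun p => p.seq) (@MeasurableSpace.pi ℕ (fun _ => A) (fun _ => ⊤))

/-- The shift map `σ`. -/
def shift (s r : A → V) (p : PathSpace s r) : PathSpace s r :=
  ⟨fun i => p.seq (i + 1), fun i => p.compat (i + 1)⟩

/-- The cylinder set `Z(v)` of a vertex. -/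
def cylV (s r : A → V) (v : V) : Set (PathSpace s r) := {p | s (p.seq 0) = v}

/-- The cylinder set `Z(a)` of an arrow. -/
def cylA (s r : A → V) (a : A) : Set (PathSpace s r) := {p | p.seq 0 = a}

/-- A finite path: a source vertex together with a compatible list of arrows.
The empty list corresponds to the path of length `0` given by the vertex `src`. -/
structure FinPath (s r : A → V) : Type where
  src : V
  arrows : List A
  head_src : ∀ h : arrows ≠ [], s (arrows.head h) = src
  chain : arrows.Chain' (fun a b => r a = s b)

/-- The range `r(μ)` of a finite path. -/
def finRng (s r : A → V) (μ : FinPath s r) : V :=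
  match μ.arrows.getLast? with
  | none => μ.src
  | some a => r a

/-- The additive extension `F(μ)` of a potential to finite paths. -/
def finWt (s r : A → V) (F : A → ℝ) (μ : FinPath s r) : ℝ := (μ.arrows.map F).sum

/-- The cylinder set `Z(μ)` of a finite path. -/
def finCyl (s r : A → V) (μ : FinPath s r) : Set (PathSpace s r) :=
  {p | s (p.seq 0) = μ.src ∧ ∀ i : Fin μ.arrows.length, p.seq i.1 = μ.arrows.get i}

/-- The set of vertices occurring in a finite path. -/
def finVerts (s r : A → V) (μ : FinPath s r) : Set V :=
  {μ.src} ∪ {v | ∃ a ∈ μ.arrows, s a = v ∨ r a = v}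

/-- The entries of the matrix `A(β)`. -/
noncomputable def Amat (s r : A → V) (F : A → ℝ) (β : ℝ) (v w : V) : ℝ≥0∞ :=
  ∑' a : {a : A // s a = v ∧ r a = w}, ENNReal.ofReal (Real.exp (-(β * F a.1)))

/-- Powers of a `[0,∞]`-valued matrix. -/
noncomputable def matPow (M : V → V → ℝ≥0∞) : ℕ → V → V → ℝ≥0∞
  | 0 => fun v w => ({v} : Set V).indicator (fun _ => (1 : ℝ≥0∞)) w
  | n + 1 => fun v w => ∑' u : V, M v u * matPow M n u w

/-- The entries of `A(β)ⁿ`. -/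
noncomputable def Apow (s r : A → V) (F : A → ℝ) (β : ℝ) (n : ℕ) (v w : V) : ℝ≥0∞ :=
  matPow (Amat s r F β) n v w

/-- The Green function `Σₙ A(β)ⁿ_{v,w}`. -/
noncomputable def Green (s r : A → V) (F : A → ℝ) (β : ℝ) (v w : V) : ℝ≥0∞ :=
  ∑' n : ℕ, Apow s r F β n v w

/-- The Martin kernel `K_β(v,w)` with base point `v₀`. -/
noncomputable def MartinK (s r : A → V) (F : A → ℝ) (β : ℝ) (v₀ v w : V) : ℝ≥0∞ :=
  Green s r F β v w / Green s r F β v₀ w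

/-- A harmonic vector for a `[0,∞]`-valued matrix: a nonzero, finite-valued,
nonnegative vector fixed by the matrix. -/
def IsHarmonic (M : V → V → ℝ≥0∞) (ψ : V → ℝ≥0∞) : Prop :=
  ψ ≠ 0 ∧ (∀ v, ψ v ≠ ∞) ∧ ∀ v, (∑' w : V, M v w * ψ w) = ψ v

/-- A minimal harmonic vector. -/
def IsMinimalHarmonic (M : V → V → ℝ≥0∞) (ψ : V → ℝ≥0∞) : Prop :=
  IsHarmonic M ψ ∧ ∀ φ : V → ℝ≥0∞, IsHarmonic M φ → (∀ v, φ v ≤ ψ v) →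
    ∃ c : ℝ≥0, 0 < c ∧ ∀ v, φ v = (c : ℝ≥0∞) * ψ v

/-- An `e^{βF}`-conformal measure: a nonzero Borel measure which is finite on the
cylinders of vertices and satisfies `m(σ(B ∩ Z(a))) = e^{βF(a)} m(B ∩ Z(a))`. -/
def Conformal (s r : A → V) (F : A → ℝ) (β : ℝ) (m : Measure (PathSpace s r)) : Prop :=
  m ≠ 0 ∧ (∀ v : V, m (cylV s r v) ≠ ∞) ∧
    ∀ (a : A) (B : Set (PathSpace s r)), MeasurableSet B →
      m (shift s r '' (B ∩ cylA s r a)) =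
        ENNReal.ofReal (Real.exp (β * F a)) * m (B ∩ cylA s r a)

/-- An extremal conformal measure: every conformal measure dominated by it is a
positive scalar multiple of it. -/
def ExtremalConformal (s r : A → V) (F : A → ℝ) (β : ℝ) (m : Measure (PathSpace s r)) : Prop :=
  Conformal s r F β m ∧ ∀ m' : Measure (PathSpace s r), Conformal s r F β m' →
    (∀ B : Set (PathSpace s r), MeasurableSet B → m' B ≤ m B) →
    ∃ c : ℝ≥0, 0 < c ∧ m' = (c : ℝ≥0∞) • m

/-- A wandering path: its vertices leave every finite set of vertices. -/
def Wandering (s r : A → V) (p : PathSpace s r) : Prop :=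
  ∀ F₀ : Finset V, ∃ N : ℕ, ∀ i, N ≤ i → s (p.seq i) ∉ F₀

/-- A ray: an infinite path with pairwise distinct vertices. -/
def IsRay (s r : A → V) (p : PathSpace s r) : Prop :=
  Function.Injective fun i => s (p.seq i)

/-- The relation `p → q` between (wandering) paths. -/
def Leads (s r : A → V) (p q : PathSpace s r) : Prop :=
  ∀ (F₀ : Finset V) (N : ℕ), ∃ n₁ n₂ : ℕ, N ≤ n₁ ∧ N ≤ n₂ ∧
    ∃ μ : FinPath s r, μ.src = s (p.seq n₁) ∧ finRng s r μ = s (q.seq n₂) ∧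
      ∀ v ∈ finVerts s r μ, v ∉ F₀

/-- Nonempty path lists from `v` to `w`. -/
def IsPathList (s r : A → V) (l : List A) (v w : V) : Prop :=
  l ≠ [] ∧ l.Chain' (fun a b => r a = s b) ∧
    (∀ h : l ≠ [], s (l.head h) = v) ∧ ∀ h : l ≠ [], r (l.getLast h) = w

/-- The set `L_j(y)` (zero-indexed in `j`). -/
def Lset (s r : A → V) (p : PathSpace s r) (j : ℕ) : Set (List A) :=
  {l | IsPathList s r l (s (p.seq j)) (s (p.seq (j + 1))) ∧
    ∀ a ∈ l, ∀ i ≤ j, r a ≠ s (p.seq i)}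

/-- The sum `Σ_{μ ∈ L_j(y)} e^{-βF(μ)}`. -/
noncomputable def LSum (s r : A → V) (F : A → ℝ) (β : ℝ) (p : PathSpace s r) (j : ℕ) : ℝ≥0∞ :=
  ∑' l : Lset s r p j, ENNReal.ofReal (Real.exp (-(β * (l.1.map F).sum)))

/-- The product `𝕎(y[1,k+1[)` (zero-indexed: the product of the first `k` level sums). -/
noncomputable def Wprod (s r : A → V) (F : A → ℝ) (β : ℝ) (p : PathSpace s r) (k : ℕ) : ℝ≥0∞ :=
  ∏ j ∈ Finset.range k, LSum s r F β p j

/-- `𝕍_β(v,y)`: the limit of the nondecreasing sequence of quotients. -/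
noncomputable def Vbeta (s r : A → V) (F : A → ℝ) (β : ℝ) (v : V) (p : PathSpace s r) : ℝ≥0∞ :=
  Filter.limsup (fun k => Green s r F β v (s (p.seq k)) / Wprod s r F β p k) Filter.atTop

/-- `B_k(y)` (zero-indexed in `k`). -/
def Bset (s r : A → V) (p : PathSpace s r) (k : ℕ) : Set (PathSpace s r) :=
  {x | s (x.seq 0) = s (p.seq k) ∧ ∀ i, 1 ≤ i → ∀ j ≤ k, s (x.seq i) ≠ s (p.seq j)}

/-- `𝔹_k(y)` (zero-indexed in `k`). -/
def BBset (s r : A → V) (p : PathSpace s r) (k : ℕ) : Set (PathSpace s r) :=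
  Bset s r p k ∩ ⋂ (j : ℕ) (_ : k + 1 ≤ j), ⋃ i : ℕ, (shift s r)^[i] ⁻¹' Bset s r p j

/-- `𝔹(y)`. -/
def BB (s r : A → V) (p : PathSpace s r) : Set (PathSpace s r) :=
  ⋃ (n : ℕ) (k : ℕ), (shift s r)^[n] ⁻¹' ((shift s r)^[k] '' BBset s r p 0)

/-- A simple path from `v` to `w`: no arrow except possibly the last one has range `w`. -/
def IsSimplePath (s r : A → V) (v w : V) (l : List A) : Prop :=
  IsPathList s r l v w ∧ ∀ a ∈ l.dropLast, r a ≠ w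

/-- `R_{βF}(v,w)`: the sum of `e^{-βF(ν)}` over all simple paths `ν` from `v` to `w`. -/
noncomputable def Rsum (s r : A → V) (F : A → ℝ) (β : ℝ) (v w : V) : ℝ≥0∞ :=
  ∑' l : {l : List A // IsSimplePath s r v w l},
    ENNReal.ofReal (Real.exp (-(β * (l.1.map F).sum)))

open Classical in
/-- The restriction of a matrix to a subset of the index set (extended by `0`). -/
noncomputable def restrMat (M : V → V → ℝ≥0∞) (S : Set V) (v w : V) : ℝ≥0∞ :=
  if v ∈ S ∧ w ∈ S then M v w else 0

/-- A loop: a nonempty path list whose range equals its source. -/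
def IsLoop (s r : A → V) (l : List A) : Prop :=
  l ≠ [] ∧ l.Chain' (fun a b => r a = s b) ∧
    ∀ h : l ≠ [], r (l.getLast h) = s (l.head h)

/-! ### The action of `A(β)` and the exit vector -/

open Classical in
theorem Amat_eq_tsum_ite (s r : A → V) (F : A → ℝ) (β : ℝ) (v w : V) :
    Amat s r F β v w =
      ∑' a : A, if s a = v ∧ r a = w then ENNReal.ofReal (Real.exp (-(β * F a))) else 0 := by
  unfold Amat
  exact (tsum_subtype {a : A | s a = v ∧ r a = w}
    (fun a => ENNReal.ofReal (Real.exp (-(β * F a))))).trans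
    (tsum_congr fun a => by simp [Set.indicator_apply])

open Classical in
/-- The action of `A(β)` on a vector, as a sum over arrows. -/
theorem tsum_Amat_mul (s r : A → V) (F : A → ℝ) (β : ℝ) (f : V → ℝ≥0∞) (v : V) :
    ∑' w : V, Amat s r F β v w * f w =
      ∑' a : A, if s a = v then ENNReal.ofReal (Real.exp (-(β * F a))) * f (r a) else 0 := by
  simp_rw [Amat_eq_tsum_ite, ← ENNReal.tsum_mul_right]
  rw [ENNReal.tsum_comm]
  refine tsum_congr fun a => ?_
  rw [tsum_eq_single (r a)]
  · by_cases h : s a = v <;> simp [h]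
  · intro w hw
    simp [hw.symm]

open Classical in
/-- The one-step exit vector: the weight of `ψ` carried by the arrows that start at `u` and go from
the complement of `H` into `H`. -/
noncomputable def exitVec (s r : A → V) (F : A → ℝ) (β : ℝ) (H : Set V) (ψ : V → ℝ≥0∞)
    (u : V) : ℝ≥0∞ :=
  ∑' a : {a : A // s a ∉ H ∧ r a ∈ H},
    if s a.1 = u then ENNReal.ofReal (Real.exp (-(β * F a.1))) * ψ (r a.1) else 0

open Classical in
theorem exitVec_eq (s r : A → V) (F : A → ℝ) (β : ℝ) (H : Set V) (ψ : V → ℝ≥0∞)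
    {v : V} (hv : v ∉ H) :
    exitVec s r F β H ψ v =
      ∑' w : V, Amat s r F β v w * (if w ∈ H then ψ w else 0) := by
  rw [tsum_Amat_mul]
  unfold exitVec
  refine (tsum_subtype {a : A | s a ∉ H ∧ r a ∈ H}
    (fun a => if s a = v then ENNReal.ofReal (Real.exp (-(β * F a))) * ψ (r a) else 0)).trans
    (tsum_congr fun a => ?_)
  by_cases h : s a = v
  · by_cases h' : r a ∈ H <;> simp [Set.indicator_apply, h, h', hv]
  · simp [Set.indicator_apply, h]

open Classical in
/-- Splitting the arrows leaving `v ∉ H` by whether they end in `H`. -/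
theorem tsum_Amat_mul_eq (s r : A → V) (F : A → ℝ) (β : ℝ) (H : Set V) (ψ φ : V → ℝ≥0∞)
    (hφ : ∀ v ∈ H, φ v = ψ v) {v : V} (hv : v ∉ H) :
    ∑' w : V, Amat s r F β v w * φ w =
      exitVec s r F β H ψ v + ∑' w : V, restrMat (Amat s r F β) Hᶜ v w * φ w := by
  rw [exitVec_eq s r F β H ψ hv, ← ENNReal.tsum_add]
  refine tsum_congr fun w => ?_
  by_cases h : w ∈ H
  · simp [restrMat, h, hφ w h]
  · simp [restrMat, h, hv]

/-- A vector agreeing on the hereditary set `H` with a `B(β)`-harmonic vector is fixed by `A(β)`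
at the vertices of `H`. -/
theorem tsum_Amat_mul_of_mem (s r : A → V) (F : A → ℝ) (β : ℝ) (H : Set V)
    (hH : ∀ a : A, s a ∈ H → r a ∈ H) (ψ φ : V → ℝ≥0∞)
    (hψharm : ∀ v ∈ H, (∑' w : V, restrMat (Amat s r F β) H v w * ψ w) = ψ v)
    (hφ : ∀ v ∈ H, φ v = ψ v) {v : V} (hv : v ∈ H) :
    ∑' w : V, Amat s r F β v w * φ w = φ v := by
  rw [hφ v hv, ← hψharm v hv]
  refine tsum_congr fun w => ?_
  by_cases h : w ∈ H
  · simp [restrMat, h, hv, hφ w h]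
  · have h0 : Amat s r F β v w = 0 := by
      unfold Amat
      rw [ENNReal.tsum_eq_zero]
      rintro ⟨a, ha, rfl⟩
      exact absurd (hH a (ha ▸ hv)) h
    simp [restrMat, h, h0]

/-- The sum in the theorem is the `v`-th entry of `Σₙ Cⁿ b`, with `b` the exit vector. -/
theorem exitSum_eq (s r : A → V) (F : A → ℝ) (β : ℝ) (H : Set V) (ψ : V → ℝ≥0∞)
    (C : V → V → ℝ≥0∞) (v : V) :
    (∑' a : {a : A // s a ∉ H ∧ r a ∈ H}, ∑' n : ℕ,
        matPow C n v (s a.1) * ENNReal.ofReal (Real.exp (-(β * F a.1))) * ψ (r a.1)) =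
      ∑' n : ℕ, ∑' u : V, matPow C n v u * exitVec s r F β H ψ u := by
  classical
  rw [ENNReal.tsum_comm]
  refine tsum_congr fun n => ?_
  unfold exitVec
  simp_rw [← ENNReal.tsum_mul_left]
  rw [ENNReal.tsum_comm]
  refine tsum_congr fun a => ?_
  rw [tsum_eq_single (s a.1)]
  · simp [mul_assoc]
  · intro u hu
    simp [hu.symm]

/-! ### The minimal solution of `x = b + C x` -/

theorem tsum_matPow_zero_mul (C : V → V → ℝ≥0∞) (b : V → ℝ≥0∞) (v : V) :
    ∑' u : V, matPow C 0 v u * b u = b v := by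
  rw [tsum_eq_single v]
  · simp [matPow]
  · intro u hu
    simp [matPow, hu]

theorem tsum_matPow_succ_mul (C : V → V → ℝ≥0∞) (b : V → ℝ≥0∞) (n : ℕ) (v : V) :
    ∑' u : V, matPow C (n + 1) v u * b u =
      ∑' w : V, C v w * ∑' u : V, matPow C n w u * b u := by
  simp_rw [matPow, ← ENNReal.tsum_mul_left, ← ENNReal.tsum_mul_right]
  rw [ENNReal.tsum_comm]
  simp_rw [mul_assoc]

/-- `x = Σₙ Cⁿ b` satisfies `x = b + C x`. -/
theorem tsum_pow_exit_eq (C : V → V → ℝ≥0∞) (b : V → ℝ≥0∞) (v : V) :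
    ∑' n : ℕ, ∑' u : V, matPow C n v u * b u =
      b v + ∑' w : V, C v w * ∑' n : ℕ, ∑' u : V, matPow C n w u * b u := by
  rw [tsum_eq_zero_add' ENNReal.summable, tsum_matPow_zero_mul]
  congr 1
  simp_rw [tsum_matPow_succ_mul, ← ENNReal.tsum_mul_left (a := C v _) (f := fun n : ℕ => _)]
  rw [ENNReal.tsum_comm]

/-- Minimality of `Σₙ Cⁿ b`: it lies below every `x` with `b + C x ≤ x`. The inequality is needed
only on a set `S` such that `C` has no entries from `S` to its complement. -/
theorem tsum_pow_exit_le (C : V → V → ℝ≥0∞) (b x : V → ℝ≥0∞) (S : Set V)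
    (hC : ∀ v ∈ S, ∀ w, w ∉ S → C v w = 0)
    (hx : ∀ v ∈ S, b v + ∑' w : V, C v w * x w ≤ x v) {v : V} (hv : v ∈ S) :
    ∑' n : ℕ, ∑' u : V, matPow C n v u * b u ≤ x v := by
  have key : ∀ N : ℕ, ∀ v ∈ S,
      ∑ n ∈ Finset.range N, ∑' u : V, matPow C n v u * b u ≤ x v := by
    intro N
    induction N with
    | zero => intro v _; simp
    | succ N ih =>
      intro v hv
      refine le_trans ?_ (hx v hv)
      rw [Finset.sum_range_succ', tsum_matPow_zero_mul, add_comm]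
      gcongr
      simp_rw [tsum_matPow_succ_mul]
      rw [← Summable.tsum_finsetSum fun _ _ => ENNReal.summable]
      refine ENNReal.tsum_le_tsum fun w => ?_
      rw [← Finset.mul_sum]
      by_cases hw : w ∈ S
      · gcongr
        exact ih w hw
      · simp [hC v hv w hw]
  exact ENNReal.tsum_le_of_sum_range_le fun N => key N v hv

/-! ### Finiteness along paths -/

theorem ne_top_of_arrow (s r : A → V) (F : A → ℝ) (β : ℝ) (φ : V → ℝ≥0∞)
    (hφ : ∀ v, ∑' w : V, Amat s r F β v w * φ w = φ v) (a : A) (h : φ (s a) ≠ ∞) :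
    φ (r a) ≠ ∞ := by
  classical
  intro htop
  apply h
  rw [← hφ, tsum_Amat_mul]
  refine ENNReal.tsum_eq_top_of_eq_top ⟨a, ?_⟩
  have : ENNReal.ofReal (Real.exp (-(β * F a))) ≠ 0 := by
    simpa using Real.exp_pos _
  simp only [if_true, htop]
  exact ENNReal.mul_top this

theorem ne_top_of_chain (s r : A → V) (F : A → ℝ) (β : ℝ) (φ : V → ℝ≥0∞)
    (hφ : ∀ v, ∑' w : V, Amat s r F β v w * φ w = φ v) (l : List A) :
    ∀ v, (∀ h : l ≠ [], s (l.head h) = v) → l.IsChain (fun a b => r a = s b) → φ v ≠ ∞ →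
      ∀ a ∈ l, φ (r a) ≠ ∞ := by
  induction l with
  | nil => intro v _ _ _ a ha; simp at ha
  | cons c l ih =>
    intro v hhead hchain hv a ha
    have hc : φ (r c) ≠ ∞ := by
      refine ne_top_of_arrow s r F β φ hφ c ?_
      have := hhead (by simp)
      simp only [List.head_cons] at this
      rwa [this]
    rw [List.isChain_cons] at hchain
    rcases List.mem_cons.1 ha with rfl | ha
    · exact hc
    · exact ih (r c) (fun h => (hchain.1 _ (by simp [List.head?_eq_some_head h])).symm)
        hchain.2 hc a ha

/-- Finiteness of a vector fixed by `A(β)` propagates along finite paths. -/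
theorem ne_top_of_finPath (s r : A → V) (F : A → ℝ) (β : ℝ) (φ : V → ℝ≥0∞)
    (hφ : ∀ v, ∑' w : V, Amat s r F β v w * φ w = φ v) (μ : FinPath s r)
    (h : φ μ.src ≠ ∞) : φ (finRng s r μ) ≠ ∞ := by
  unfold finRng
  split
  · exact h
  · rename_i a ha
    exact ne_top_of_chain s r F β φ hφ μ.arrows μ.src μ.head_src μ.chain h a
      (List.mem_of_getLast? ha)

/-! ### Extension of harmonic vectors -/

open Classical in
/-- extension of harmonic vectors from a hereditary subset. A `B(β)`-harmonic
vector `ψ` on a hereditary set `H` extends to an `A(β)`-harmonic vector iff the sum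
`Σ_{a ∈ M} Σₙ C(β)ⁿ_{v₀,s(a)} e^{-βF(a)} ψ_{r(a)}` is finite, in which case the explicit
vector `ψ̄` is an `A(β)`-harmonic extension. -/
theorem statement14 {V A : Type} [Countable V] [Countable A] (s r : A → V)
    (F : A → ℝ) (β : ℝ) (v₀ : V)
    (hreach : ∀ v : V, ∃ μ : FinPath s r, μ.src = v₀ ∧ finRng s r μ = v)
    (H : Set V) (hH : ∀ a : A, s a ∈ H → r a ∈ H) (hv₀ : v₀ ∉ H)
    (ψ : V → ℝ≥0∞) (hψ0 : ∃ v ∈ H, ψ v ≠ 0) (hψfin : ∀ v ∈ H, ψ v ≠ ∞)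
    (hψharm : ∀ v ∈ H, (∑' w : V, restrMat (Amat s r F β) H v w * ψ w) = ψ v) :
    ((∃ φ : V → ℝ≥0∞, IsHarmonic (Amat s r F β) φ ∧ ∀ v ∈ H, φ v = ψ v) ↔
      (∑' a : {a : A // s a ∉ H ∧ r a ∈ H}, ∑' n : ℕ,
        matPow (restrMat (Amat s r F β) (Hᶜ)) n v₀ (s a.1) *
          ENNReal.ofReal (Real.exp (-(β * F a.1))) * ψ (r a.1)) ≠ ∞) ∧
    ((∑' a : {a : A // s a ∉ H ∧ r a ∈ H}, ∑' n : ℕ,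
        matPow (restrMat (Amat s r F β) (Hᶜ)) n v₀ (s a.1) *
          ENNReal.ofReal (Real.exp (-(β * F a.1))) * ψ (r a.1)) ≠ ∞ →
      IsHarmonic (Amat s r F β) (fun v =>
        if v ∈ H then ψ v
        else ∑' a : {a : A // s a ∉ H ∧ r a ∈ H}, ∑' n : ℕ,
          matPow (restrMat (Amat s r F β) (Hᶜ)) n v (s a.1) *
            ENNReal.ofReal (Real.exp (-(β * F a.1))) * ψ (r a.1)) ∧
      ∀ v ∈ H,
        (fun v => if v ∈ H then ψ v
          else ∑' a : {a : A // s a ∉ H ∧ r a ∈ H}, ∑' n : ℕ,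
            matPow (restrMat (Amat s r F β) (Hᶜ)) n v (s a.1) *
              ENNReal.ofReal (Real.exp (-(β * F a.1))) * ψ (r a.1)) v = ψ v) := by
  simp_rw [exitSum_eq]
  set C := restrMat (Amat s r F β) Hᶜ with hCdef
  set b := exitVec s r F β H ψ with hbdef
  have hmain : (∑' n : ℕ, ∑' u : V, matPow C n v₀ u * b u) ≠ ∞ →
      IsHarmonic (Amat s r F β) (fun v =>
        if v ∈ H then ψ v else ∑' n : ℕ, ∑' u : V, matPow C n v u * b u) := by
    intro hfin
    set φ : V → ℝ≥0∞ := fun v =>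
      if v ∈ H then ψ v else ∑' n : ℕ, ∑' u : V, matPow C n v u * b u with hφdef
    have hext : ∀ v ∈ H, φ v = ψ v := fun v hv => by simp [hφdef, hv]
    have hfix : ∀ v, ∑' w : V, Amat s r F β v w * φ w = φ v := by
      intro v
      by_cases hv : v ∈ H
      · exact tsum_Amat_mul_of_mem s r F β H hH ψ φ hψharm hext hv
      · rw [tsum_Amat_mul_eq s r F β H ψ φ hext hv]
        have h1 : φ v = ∑' n : ℕ, ∑' u : V, matPow C n v u * b u := by simp [hφdef, hv]
        rw [h1, tsum_pow_exit_eq]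
        congr 1
        refine tsum_congr fun w => ?_
        by_cases hw : w ∈ H
        · simp [hCdef, restrMat, hw]
        · simp [hφdef, hw, ← hCdef]
    refine ⟨?_, ?_, hfix⟩
    · obtain ⟨v, hv, hne⟩ := hψ0
      intro h0
      exact hne (by rw [← hext v hv, h0]; rfl)
    · intro v
      obtain ⟨μ, hsrc, rfl⟩ := hreach v
      refine ne_top_of_finPath s r F β φ hfix μ ?_
      rw [hsrc]
      simpa [hφdef, hv₀] using hfin
  refine ⟨⟨?_, fun h => ⟨_, hmain h, fun v hv => by simp [hv]⟩⟩,
    fun h => ⟨hmain h, fun v hv => by simp [hv]⟩⟩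
  rintro ⟨φ, ⟨-, hφfin, hφfix⟩, hext⟩
  refine ne_top_of_le_ne_top (hφfin v₀) (tsum_pow_exit_le C b φ Hᶜ ?_ ?_ hv₀)
  · intro v _ w hw
    simp [hCdef, restrMat, not_not.1 hw]
  · intro v hv
    rw [← tsum_Amat_mul_eq s r F β H ψ φ hext hv, hφfix v]

end GraphKMS
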